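/- arXiv:2601.15244 — 2 statements merged into one kernel-verified Lean document; each statement's English description precedes it below -/
import Mathlib

section
/- For all integers n, δ, a, b with n ≥ 0, δ ≥ 1, a ≥ 6, b ≥ (a+3)·n and b ≥ 6δ − 3n + 3, one has −n·(⌊a/3⌋+2)² + 2·(⌊a/3⌋+2)·(⌊b/3⌋+n+2) − 4δ ≥ 10. -/
/-! With `s = ⌊a/3⌋ + 2` and `m = ⌊b/3⌋ + n`, the class is `N = s C₀ + (m + 2) F - 2E`, and the two
lower bounds on `b` survive rounding down as `s n ≤ m` and `2δ + 1 ≤ m`. The second trades `4δ` for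
`2(m - 1)`, so that `N² ≥ (2s - 2) m - n s² + 4s + 2`; by the first, the right-hand side is at least
`n s (s - 2) + 4s + 2`. -/

theorem le_fdiv_iff_mul_le {a c d : ℤ} (hd : 0 < d) : c ≤ a.fdiv d ↔ c * d ≤ a := by
  rw [Int.fdiv_eq_ediv_of_nonneg a hd.le, Int.le_ediv_iff_mul_le hd]

theorem fdiv_mul_le_fdiv_of_mul_le {a b d n : ℤ} (hd : 0 < d) (hn : 0 ≤ n) (h : a * n ≤ b) :
    a.fdiv d * n ≤ b.fdiv d := by
  rw [le_fdiv_iff_mul_le hd]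
  calc
    a.fdiv d * n * d = d * a.fdiv d * n := by ring
    _ ≤ a * n := mul_le_mul_of_nonneg_right (Int.mul_fdiv_self_le hd) hn
    _ ≤ b := h

theorem four_mul_add_two_le_self_intersection {R : Type*} [CommRing R] [LinearOrder R]
    [IsStrictOrderedRing R] {n s m δ : R} (hn : 0 ≤ n) (hs : 2 ≤ s) (hnm : s * n ≤ m)
    (hδm : 2 * δ + 1 ≤ m) : 4 * s + 2 ≤ -n * s ^ 2 + 2 * s * (m + 2) - 4 * δ := by
  have h_excess : 0 ≤ n * s * (s - 2) :=
    mul_nonneg (mul_nonneg hn (zero_le_two.trans hs)) (sub_nonneg.2 hs)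
  have h_coeff : 0 ≤ 2 * s - 2 := by linarith
  calc
    4 * s + 2 ≤ n * s * (s - 2) + (4 * s + 2) := le_add_of_nonneg_left h_excess
    _ = (2 * s - 2) * (s * n) - n * s ^ 2 + 4 * s + 2 := by ring
    _ ≤ (2 * s - 2) * m - n * s ^ 2 + 4 * s + 2 := by gcongr
    _ = -n * s ^ 2 + 2 * s * (m + 2) - 2 * (m - 1) := by ring
    _ ≤ -n * s ^ 2 + 2 * s * (m + 2) - 4 * δ := by linarith

theorem stmt_1_general (n δ a b : ℤ) (hn : 0 ≤ n) (ha : 0 ≤ a)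
    (hb1 : (a + 3) * n ≤ b) (hb2 : 6 * δ - 3 * n + 3 ≤ b) :
    4 * Int.fdiv a 3 + 10 ≤ -n * (Int.fdiv a 3 + 2) ^ 2
      + 2 * (Int.fdiv a 3 + 2) * (Int.fdiv b 3 + n + 2) - 4 * δ := by
  have hs : 2 ≤ a.fdiv 3 + 2 := le_add_of_nonneg_left (Int.fdiv_nonneg ha zero_le_three)
  have h_fdiv : (a + 3).fdiv 3 = a.fdiv 3 + 1 := Int.add_fdiv_of_dvd_right dvd_rfl
  have hnm : (a.fdiv 3 + 2) * n ≤ b.fdiv 3 + n := by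
    linarith [h_fdiv ▸ fdiv_mul_le_fdiv_of_mul_le three_pos hn hb1]
  have hδ_fdiv : 2 * δ - n + 1 ≤ b.fdiv 3 := (le_fdiv_iff_mul_le three_pos).2 (by linarith)
  have hδm : 2 * δ + 1 ≤ b.fdiv 3 + n := by linarith
  linarith [four_mul_add_two_le_self_intersection hn hs hnm hδm]

/-- The Reider-criterion inequality `N² ≥ 10` for `N = σ*A − E − K_X`,
where `A = ⌊a/3⌋C₀ + ⌊b/3⌋F`.  Here `Int.fdiv x 3` is the integer floor `⌊x/3⌋`. -/
theorem stmt_1 (n δ a b : ℤ) (hn : 0 ≤ n) (hδ : 1 ≤ δ) (ha : 6 ≤ a)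
    (hb1 : (a + 3) * n ≤ b) (hb2 : 6 * δ - 3 * n + 3 ≤ b) :
    10 ≤ -n * (Int.fdiv a 3 + 2) ^ 2
      + 2 * (Int.fdiv a 3 + 2) * (Int.fdiv b 3 + n + 2) - 4 * δ := by
  have ha_nonneg : 0 ≤ a := by linarith
  linarith [stmt_1_general n δ a b hn ha_nonneg hb1 hb2, Int.fdiv_nonneg ha_nonneg zero_le_three]
end

section
/- For all integers n, δ, a, b with n ≥ 0, δ ≥ 1, a ≥ 6, b ≥ (a+7)·n and b ≥ 6δ − 3n + 3, setting f = a − 2⌊a/3⌋ + 2 and s = b − 2⌊b/3⌋, one has f·(2s + 2n + 4) − n·f² − 4δ ≥ 10. -/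
/-!
On the blow-up of `F_n` at `δ` points, `N = f C₀ + (s + n + 2) F - 2 E`, where `C₀² = -n`,
`C₀ · F = 1`, `F² = 0`, `E² = -δ` and `C₀ · E = F · E = 0`; this gives the formula for `N²`.
The hypotheses on `b` become `n (f - 1) ≤ s` and `2 δ ≤ s + n - 1`, because tripling
`x - 2 ⌊x / 3⌋` gives back `x` with an error `2 (x mod 3)` between `0` and `4`. The second bound
eliminates `δ`, leaving an expression increasing in `s`; at the extreme value `s = n (f - 1)`
it equals `n f (f - 2) + 4 f + 2`, which is at least `10` as soon as `f ≥ 2`.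
-/

section FloorDivision

variable {m : ℤ}

lemma succ_mul_sub_mul_fdiv (m x : ℤ) :
    (m + 1) * (x - m * x.fdiv (m + 1)) = x + m * x.fmod (m + 1) := by
  rw [Int.fmod_def]
  ring

lemma le_succ_mul_sub_mul_fdiv (hm : 0 ≤ m) (x : ℤ) :
    x ≤ (m + 1) * (x - m * x.fdiv (m + 1)) := by
  rw [succ_mul_sub_mul_fdiv]
  exact le_add_of_nonneg_right (mul_nonneg hm (Int.fmod_nonneg_of_pos x (by lia)))

lemma succ_mul_sub_mul_fdiv_le (hm : 0 ≤ m) (x : ℤ) :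
    (m + 1) * (x - m * x.fdiv (m + 1)) ≤ x + m ^ 2 := by
  have fmod_le : x.fmod (m + 1) ≤ m := Int.lt_add_one_iff.mp (Int.fmod_lt_of_pos x (by lia))
  rw [succ_mul_sub_mul_fdiv, sq]
  gcongr

lemma sub_mul_fdiv_succ_nonneg (hm : 0 ≤ m) {x : ℤ} (hx : -m ≤ x) :
    0 ≤ x - m * x.fdiv (m + 1) := by
  by_contra! h_neg
  have h_le : (m + 1) * (x - m * x.fdiv (m + 1)) ≤ (m + 1) * (-1) := by
    gcongr
    lia
  linarith [le_succ_mul_sub_mul_fdiv hm x]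

end FloorDivision

section SelfIntersection

variable {R : Type*} [CommRing R]

/-- The self-intersection `N²` of `N = f C₀ + (s + n + 2) F - 2 E` on the blow-up of the
Hirzebruch surface `F_n` at `δ` points, that is, of `N = σ*B - E - K_X` with
`B = (f - 2) C₀ + s F`, as a polynomial in the parameters over any commutative ring. -/
def adjointSelfIntersection (n δ f s : R) : R :=
  f * (2 * s + 2 * n + 4) - n * f ^ 2 - 4 * δ

variable [LinearOrder R] [IsStrictOrderedRing R] {n δ f s : R}

lemma le_adjointSelfIntersection (hf : 1 ≤ f) (hs : n * (f - 1) ≤ s)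
    (hδ : 2 * δ ≤ s + n - 1) :
    n * (f * (f - 2)) + (4 * f + 2) ≤ adjointSelfIntersection n δ f s := by
  have : 0 ≤ f - 1 := sub_nonneg.mpr hf
  calc n * (f * (f - 2)) + (4 * f + 2)
      = 2 * (f - 1) * (n * (f - 1) + n) - n * f ^ 2 + (4 * f + 2) := by ring
    _ ≤ 2 * (f - 1) * (s + n) - n * f ^ 2 + (4 * f + 2) := by gcongr
    _ = f * (2 * s + 2 * n + 4) - n * f ^ 2 - 2 * (s + n - 1) := by ring
    _ ≤ f * (2 * s + 2 * n + 4) - n * f ^ 2 - 4 * δ := by linarith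

lemma ten_le_adjointSelfIntersection (hn : 0 ≤ n) (hf : 2 ≤ f) (hs : n * (f - 1) ≤ s)
    (hδ : 2 * δ ≤ s + n - 1) : 10 ≤ adjointSelfIntersection n δ f s := by
  have h_nonneg : 0 ≤ n * (f * (f - 2)) :=
    mul_nonneg hn (mul_nonneg (by linarith) (sub_nonneg.mpr hf))
  linarith [le_adjointSelfIntersection (by linarith) hs hδ]

end SelfIntersection

theorem stmt_3_general (n δ a b : ℤ) (hn : 0 ≤ n) (ha : -2 ≤ a)
    (hb1 : (a + 7) * n ≤ b) (hb2 : 6 * δ - 3 * n + 3 ≤ b) :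
    10 ≤ (a - 2 * Int.fdiv a 3 + 2) * (2 * (b - 2 * Int.fdiv b 3) + 2 * n + 4)
      - n * (a - 2 * Int.fdiv a 3 + 2) ^ 2 - 4 * δ := by
  set f := a - 2 * Int.fdiv a 3 + 2 with hf
  set s := b - 2 * Int.fdiv b 3
  have two_le_f : 2 ≤ f := le_add_of_nonneg_left (sub_mul_fdiv_succ_nonneg zero_le_two ha)
  have f_le : 3 * (f - 2) ≤ a + 2 ^ 2 := by
    rw [hf, add_sub_cancel_right]
    exact succ_mul_sub_mul_fdiv_le zero_le_two a
  have b_le : b ≤ 3 * s := le_succ_mul_sub_mul_fdiv zero_le_two b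
  have s_ge : 3 * (n * (f - 1)) ≤ 3 * s := calc
    3 * (n * (f - 1)) = (3 * (f - 2) + 3) * n := by ring
    _ ≤ (a + 2 ^ 2 + 3) * n := by gcongr
    _ = (a + 7) * n := by ring
    _ ≤ b := hb1
    _ ≤ 3 * s := b_le
  exact ten_le_adjointSelfIntersection hn two_le_f (by linarith) (by linarith)

/-- The Reider-criterion inequality `N² ≥ 10` for `N = σ*B − E − K_X`,
where `B = (a − 2⌊a/3⌋)C₀ + (b − 2⌊b/3⌋)F`.
Here `Int.fdiv x 3` is the integer floor `⌊x/3⌋`. -/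
theorem stmt_3 (n δ a b : ℤ) (hn : 0 ≤ n) (hδ : 1 ≤ δ) (ha : 6 ≤ a)
    (hb1 : (a + 7) * n ≤ b) (hb2 : 6 * δ - 3 * n + 3 ≤ b) :
    10 ≤ (a - 2 * Int.fdiv a 3 + 2) * (2 * (b - 2 * Int.fdiv b 3) + 2 * n + 4)
      - n * (a - 2 * Int.fdiv a 3 + 2) ^ 2 - 4 * δ :=
  stmt_3_general n δ a b hn (by linarith) hb1 hb2
end
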